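/- Let b be a graph over a countably infinite set X and q : X → ℝ a potential. Let v ∈ F(X) be strictly positive and f : X → ℝ be such that Hv = f·v on X. Then for all finitely supported φ, ψ : X → ℝ, h(φ,ψ) = (1/2)·Σ_{x,y∈X} b(x,y)·v(x)v(y)·(φ(x)/v(x) − φ(y)/v(y))·(ψ(x)/v(x) − ψ(y)/v(y)) + Σ_{x∈X} f(x)·φ(x)·ψ(x), where h(φ,ψ) = (1/2)Σ_{x,y∈X} b(x,y)(φ(x) − φ(y))(ψ(x) − ψ(y)) + Σ_{x∈X} q(x)φ(x)ψ(x). -/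

import Mathlib

/-- `f` belongs to `F(X)`: `∑_y b x y |f y| < ∞` for every `x`. -/
def memF {X : Type} (b : X → X → ℝ) (f : X → ℝ) : Prop :=
  ∀ x : X, Summable fun y => b x y * |f y|

/-- The formal graph Laplacian `L f x = ∑_y b x y (f x - f y)`. -/
noncomputable def lap {X : Type} (b : X → X → ℝ) (f : X → ℝ) (x : X) : ℝ :=
  ∑' y : X, b x y * (f x - f y)

/-- The formal Schrödinger operator `H = L + q`. -/
noncomputable def schrod {X : Type} (b : X → X → ℝ) (q : X → ℝ) (f : X → ℝ) (x : X) : ℝ :=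
  lap b f x + q x * f x

/-- The quadratic form `h(φ)` of `H = L + q`. -/
noncomputable def quadForm {X : Type} (b : X → X → ℝ) (q : X → ℝ) (φ : X → ℝ) : ℝ :=
  (1 / 2) * (∑' p : X × X, b p.1 p.2 * (φ p.1 - φ p.2) ^ 2) + ∑' x : X, q x * φ x ^ 2

/-!
Green's formula identifies the form of a Schrödinger operator `H` with `∑ φ · Hψ`, so the identity
between forms follows from an identity between operators. That identity is
`H_v (ψ / v) = v · Hψ`, where `H_v` is the Schrödinger operator with weights `b x y * v x * v y`
and potential `f * v ^ 2`; it rests on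
`v x * v y * (ψ x / v x - ψ y / v y) = v x * (ψ x - ψ y) - ψ x * (v x - v y)`.
-/

theorem summable_prod_of_finite_of_summable_rows {α β M : Type*} [AddCommMonoid M]
    [TopologicalSpace M] [ContinuousAdd M] {K : α × β → M} {s : Set α} (hs : s.Finite)
    (hK : ∀ x ∉ s, ∀ y, K (x, y) = 0) (hrow : ∀ x ∈ s, Summable fun y => K (x, y)) :
    Summable K := by
  classical
  have hslice : ∀ x ∈ hs.toFinset, Summable fun p : α × β => if p.1 = x then K p else 0 := by
    intro x hx
    refine ((Prod.mk_right_injective x).summable_iff fun p hp => if_neg fun hpx => ?_).mp ?_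
    · exact hp ⟨p.2, Prod.ext hpx.symm rfl⟩
    · simpa only [Function.comp_def, if_true] using hrow x (hs.mem_toFinset.mp hx)
  refine (summable_sum hslice).congr fun p => ?_
  rw [Finset.sum_ite_eq]
  split_ifs with hp
  · rfl
  · exact (hK p.1 (by simpa only [hs.mem_toFinset] using hp) p.2).symm

section Laplacian

open Function

variable {X : Type} {b : X → X → ℝ} {φ ψ v : X → ℝ}

/-- `f` lies in the natural domain of `lap b`: the series defining `lap b f x` converges at every
`x`, so that no value of the `tsum` there is junk. If `b` has summable rows, it contains `F(X)`. -/
def LapSummable (b : X → X → ℝ) (f : X → ℝ) : Prop :=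
  ∀ x, Summable fun y => b x y * (f x - f y)

/-- The energy form `½ ∑ b x y (φ x - φ y) (ψ x - ψ y)` of a weighted graph, summed over
ordered pairs, so that the factor `½` makes every edge count once. -/
noncomputable def energyForm (b : X → X → ℝ) (φ ψ : X → ℝ) : ℝ :=
  (1 / 2) * ∑' p : X × X, b p.1 p.2 * (φ p.1 - φ p.2) * (ψ p.1 - ψ p.2)

/-- The edge weights of the ground state transform of `b` by `v`. -/
def groundStateWeight (b : X → X → ℝ) (v : X → ℝ) (x y : X) : ℝ :=
  b x y * v x * v y

theorem memF_of_finite_support (hψ : (support ψ).Finite) : memF b ψ := fun x =>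
  summable_of_hasFiniteSupport <| hψ.subset fun y hy => by
    simpa using right_ne_zero_of_mul hy

theorem memF.lapSummable (hψ : memF b ψ) (hb_row : ∀ x, Summable fun y => b x y) :
    LapSummable b ψ := fun x => by
  have habs : Summable fun y => |b x y * ψ y| := by
    simpa only [abs_mul, abs_abs] using (hψ x).abs
  simpa only [mul_sub] using ((hb_row x).mul_right (ψ x)).sub habs.of_abs

theorem LapSummable.summable_mul (hψ : LapSummable b ψ) (hφ : (support φ).Finite) :
    Summable fun p : X × X => φ p.1 * (b p.1 p.2 * (ψ p.1 - ψ p.2)) :=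
  summable_prod_of_finite_of_summable_rows hφ
    (fun x hx y => by rw [notMem_support.mp hx, zero_mul])
    (fun x _ => (hψ x).mul_left (φ x))

theorem energyForm_eq_tsum_mul_lap (hb_symm : ∀ x y, b x y = b y x) (hψ : LapSummable b ψ)
    (hφ : (support φ).Finite) : energyForm b φ ψ = ∑' x, φ x * lap b ψ x := by
  let P : X × X → ℝ := fun p => φ p.1 * (b p.1 p.2 * (ψ p.1 - ψ p.2))
  have hP : Summable P := hψ.summable_mul hφ
  have hP_swap : Summable fun p : X × X => P p.swap := (Equiv.prodComm X X).summable_iff.mpr hP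
  have hsplit (p : X × X) :
      b p.1 p.2 * (φ p.1 - φ p.2) * (ψ p.1 - ψ p.2) = P p + P p.swap := by
    simp only [P, Prod.fst_swap, Prod.snd_swap, hb_symm p.2 p.1]
    ring
  calc energyForm b φ ψ = (1 / 2) * (∑' p, P p + ∑' p : X × X, P p.swap) := by
        rw [energyForm, tsum_congr hsplit, hP.tsum_add hP_swap]
    _ = ∑' p, P p := by
        rw [show ∑' p : X × X, P p.swap = ∑' p, P p from (Equiv.prodComm X X).tsum_eq P]
        ring
    _ = ∑' x, φ x * lap b ψ x := by
        simp only [hP.tsum_prod, P, tsum_mul_left, lap]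

theorem energyForm_add_tsum_potential (q : X → ℝ) (hb_symm : ∀ x y, b x y = b y x)
    (hψ : LapSummable b ψ) (hφ : (support φ).Finite) :
    energyForm b φ ψ + ∑' x, q x * φ x * ψ x = ∑' x, φ x * schrod b q ψ x := by
  have hlap : Summable fun x => φ x * lap b ψ x :=
    summable_of_hasFiniteSupport <| hφ.subset fun x hx => left_ne_zero_of_mul hx
  have hpot : Summable fun x => q x * φ x * ψ x :=
    summable_of_hasFiniteSupport <| hφ.subset fun x hx =>
      right_ne_zero_of_mul (left_ne_zero_of_mul hx)
  rw [energyForm_eq_tsum_mul_lap hb_symm hψ hφ, ← hlap.tsum_add hpot]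
  refine tsum_congr fun x => ?_
  rw [schrod]
  ring

theorem groundStateWeight_symm (hb_symm : ∀ x y, b x y = b y x) (x y : X) :
    groundStateWeight b v x y = groundStateWeight b v y x := by
  rw [groundStateWeight, groundStateWeight, hb_symm x y, mul_right_comm]

theorem groundStateWeight_mul_sub_div (hv : ∀ x, v x ≠ 0) (x y : X) :
    groundStateWeight b v x y * ((ψ / v) x - (ψ / v) y) =
      v x * (b x y * (ψ x - ψ y)) - ψ x * (b x y * (v x - v y)) := by
  have hx := hv x
  have hy := hv y
  simp only [groundStateWeight, Pi.div_apply]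
  field_simp
  ring

theorem LapSummable.groundState_div (hv : ∀ x, v x ≠ 0) (hv_lap : LapSummable b v)
    (hψ : LapSummable b ψ) : LapSummable (groundStateWeight b v) (ψ / v) := fun x => by
  simpa only [groundStateWeight_mul_sub_div hv] using
    ((hψ x).mul_left (v x)).sub ((hv_lap x).mul_left (ψ x))

theorem lap_groundState_div (hv : ∀ x, v x ≠ 0) (hv_lap : LapSummable b v)
    (hψ : LapSummable b ψ) (x : X) :
    lap (groundStateWeight b v) (ψ / v) x = v x * lap b ψ x - ψ x * lap b v x := by
  simp only [lap, groundStateWeight_mul_sub_div hv, ← tsum_mul_left]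
  exact ((hψ x).mul_left (v x)).tsum_sub ((hv_lap x).mul_left (ψ x))

theorem schrod_groundState_div {q f : X → ℝ} (hv : ∀ x, v x ≠ 0) (hv_lap : LapSummable b v)
    (hψ : LapSummable b ψ) {x : X} (hvf : schrod b q v x = f x * v x) :
    schrod (groundStateWeight b v) (f * v ^ 2) (ψ / v) x = v x * schrod b q ψ x := by
  have hlap_v : lap b v x = f x * v x - q x * v x := eq_sub_of_add_eq hvf
  have hx := hv x
  simp only [schrod, lap_groundState_div hv hv_lap hψ, hlap_v, Pi.mul_apply, Pi.pow_apply,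
    Pi.div_apply]
  field_simp
  ring

theorem stmt10_general {q f : X → ℝ} (hb_symm : ∀ x y, b x y = b y x) (hv : ∀ x, v x ≠ 0)
    (hv_lap : LapSummable b v) (hvf : ∀ x, schrod b q v x = f x * v x)
    (hφ : (support φ).Finite) (hψ : LapSummable b ψ) :
    energyForm b φ ψ + ∑' x, q x * φ x * ψ x =
      energyForm (groundStateWeight b v) (φ / v) (ψ / v) + ∑' x, f x * φ x * ψ x := by
  have hφv : (support (φ / v)).Finite := hφ.subset fun x hx => (div_ne_zero_iff.mp hx).1
  calc energyForm b φ ψ + ∑' x, q x * φ x * ψ x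
      = ∑' x, φ x * schrod b q ψ x := energyForm_add_tsum_potential q hb_symm hψ hφ
    _ = ∑' x, (φ / v) x * schrod (groundStateWeight b v) (f * v ^ 2) (ψ / v) x := by
        refine tsum_congr fun x => ?_
        rw [schrod_groundState_div hv hv_lap hψ (hvf x), Pi.div_apply, ← mul_assoc,
          div_mul_cancel₀ _ (hv x)]
    _ = energyForm (groundStateWeight b v) (φ / v) (ψ / v) +
          ∑' x, (f * v ^ 2) x * (φ / v) x * (ψ / v) x :=
        (energyForm_add_tsum_potential _ (groundStateWeight_symm hb_symm)
          (hv_lap.groundState_div hv hψ) hφv).symm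
    _ = energyForm (groundStateWeight b v) (φ / v) (ψ / v) + ∑' x, f x * φ x * ψ x := by
        congr 1
        refine tsum_congr fun x => ?_
        have hx := hv x
        simp only [Pi.mul_apply, Pi.pow_apply, Pi.div_apply]
        field_simp

end Laplacian

/-- the ground state transform. -/
theorem stmt10 (X : Type) [Countable X] [Infinite X]
    (b : X → X → ℝ) (q : X → ℝ)
    (hb_nonneg : ∀ x y, 0 ≤ b x y) (hb_symm : ∀ x y, b x y = b y x)
    (hb_diag : ∀ x, b x x = 0) (hb_row : ∀ x, Summable fun y => b x y)
    (v : X → ℝ) (hv_mem : memF b v) (hv_pos : ∀ x, 0 < v x)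
    (f : X → ℝ) (hvf : ∀ x, schrod b q v x = f x * v x) :
    ∀ φ ψ : X → ℝ, (Function.support φ).Finite → (Function.support ψ).Finite →
      (1 / 2) * (∑' p : X × X, b p.1 p.2 * (φ p.1 - φ p.2) * (ψ p.1 - ψ p.2)) +
          ∑' x : X, q x * φ x * ψ x =
        (1 / 2) * (∑' p : X × X, b p.1 p.2 * v p.1 * v p.2 *
            (φ p.1 / v p.1 - φ p.2 / v p.2) * (ψ p.1 / v p.1 - ψ p.2 / v p.2)) +
          ∑' x : X, f x * φ x * ψ x := by
  intro φ ψ hφ hψ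
  exact stmt10_general hb_symm (fun x => (hv_pos x).ne')
    (hv_mem.lapSummable hb_row) hvf hφ ((memF_of_finite_support hψ).lapSummable hb_row)
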